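/- Let (X,d) be a proper metric space, λ ∈ Δ_N, and ν = (ν₁,…,ν_N) ∈ 𝒫₁(X)^N. Consider the multi-marginal problem (MM): minimize ∫_{X^{N+1}} ∑ᵢ λᵢ d(xᵢ, x₀) dθ(x₀,x₁,…,x_N) over Borel probability measures θ on X^{N+1} whose coordinate-i marginal equals νᵢ for i = 1,…,N. Then: (1) the minimum value of the Wasserstein median problem min_{μ ∈ 𝒫₁(X)} ∑ᵢ λᵢ W₁(νᵢ,μ) equals the minimum of (MM), and both minima are attained; (2) if ν* ∈ Med_λ(ν), there exists an optimal θ for (MM) with π₀#θ = ν*, and conversely if θ is optimal for (MM), then π₀#θ ∈ Med_λ(ν), where π₀ is the projection onto the coordinate x₀; (3) if θ is optimal for (MM), ν* = π₀#θ, and λⱼ > 0, then the pushforward of θ by (x₀,…,x_N) ↦ (x₀, xⱼ) is an optimal transport plan between ν* and νⱼ, i.e. ∫ d(x₀,xⱼ) realizes W₁(ν*,νⱼ). -/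

import Mathlib

open MeasureTheory Filter Topology
open scoped ENNReal NNReal

/-- The set of couplings (transport plans): Borel probability measures on `X × X`
with first marginal `μ` and second marginal `ν`. -/
def Couplings {X : Type*} [MeasurableSpace X] (μ ν : Measure X) :
    Set (Measure (X × X)) :=
  {γ | IsProbabilityMeasure γ ∧ γ.map Prod.fst = μ ∧ γ.map Prod.snd = ν}

/-- The Wasserstein distance of order `1` between two measures on a metric space:
the infimum over couplings `γ` of `∫ d(x,y) dγ`. -/
noncomputable def W1 {X : Type*} [MetricSpace X] [MeasurableSpace X]
    (μ ν : Measure X) : ℝ :=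
  (⨅ γ ∈ Couplings μ ν, ∫⁻ p, edist p.1 p.2 ∂γ).toReal

/-- `𝒫₁(X)`: Borel probability measures on `X` with finite first moment. -/
def P1 (X : Type*) [MetricSpace X] [MeasurableSpace X] : Set (Measure X) :=
  {μ | IsProbabilityMeasure μ ∧ ∀ x₀ : X, Integrable (fun x => dist x₀ x) μ}

/-- `λ` belongs to the simplex `Δ_N`: nonnegative weights summing to `1`. -/
def memSimplex {N : ℕ} (l : Fin N → ℝ) : Prop :=
  (∀ i, 0 ≤ l i) ∧ ∑ i, l i = 1

/-- The dispersion functional `μ ↦ ∑ᵢ λᵢ W₁(νᵢ, μ)`. -/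
noncomputable def medCost {X : Type*} [MetricSpace X] [MeasurableSpace X] {N : ℕ}
    (l : Fin N → ℝ) (ν : Fin N → Measure X) (μ : Measure X) : ℝ :=
  ∑ i, l i * W1 (ν i) μ

/-- The set of Wasserstein medians of `ν₁, …, ν_N` with weights `λ`:
minimizers over `𝒫₁(X)` of the dispersion functional. -/
def Med {X : Type*} [MetricSpace X] [MeasurableSpace X] {N : ℕ}
    (l : Fin N → ℝ) (ν : Fin N → Measure X) : Set (Measure X) :=
  {μ | μ ∈ P1 X ∧ ∀ ρ ∈ P1 X, medCost l ν μ ≤ medCost l ν ρ}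

/-- Admissibility for the multi-marginal problem: `θ` is a Borel probability measure on
`X × X^N` whose `i`-th marginal (for `i = 1,…,N`) is `νᵢ`. -/
def MMAdmissible {X : Type*} [MeasurableSpace X] {N : ℕ} (ν : Fin N → Measure X)
    (θ : Measure (X × (Fin N → X))) : Prop :=
  IsProbabilityMeasure θ ∧ ∀ i, θ.map (fun p => p.2 i) = ν i

/-- The multi-marginal cost `∫ ∑ᵢ λᵢ d(xᵢ, x₀) dθ(x₀, x₁, …, x_N)`. -/
noncomputable def MMCost {X : Type*} [MetricSpace X] [MeasurableSpace X] {N : ℕ}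
    (l : Fin N → ℝ) (θ : Measure (X × (Fin N → X))) : ℝ≥0∞ :=
  ∫⁻ p, ∑ i, ENNReal.ofReal (l i) * edist (p.2 i) p.1 ∂θ

/-- Optimality for the multi-marginal problem. -/
def MMOptimal {X : Type*} [MetricSpace X] [MeasurableSpace X] {N : ℕ}
    (l : Fin N → ℝ) (ν : Fin N → Measure X) (θ : Measure (X × (Fin N → X))) : Prop :=
  MMAdmissible ν θ ∧ ∀ θ' : Measure (X × (Fin N → X)), MMAdmissible ν θ' →
    MMCost l θ ≤ MMCost l θ'

section LinearProgram

variable {E : Type*} [MeasurableSpace E] [TopologicalSpace E] [OpensMeasurableSpace E]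

/-- Integration of a nonnegative continuous function is lower semicontinuous for the weak
topology. -/
lemma lowerSemicontinuous_lintegral {f : E → ℝ≥0} (hf : Continuous f) :
    LowerSemicontinuous fun μ : ProbabilityMeasure E => ∫⁻ x, (f x : ℝ≥0∞) ∂(μ : Measure E) := by
  let g : ℕ → BoundedContinuousFunction E ℝ≥0 := fun n =>
    BoundedContinuousFunction.mkOfBound ⟨fun x => min (f x) n, by fun_prop⟩ n (fun x y => by
      refine (NNReal.dist_eq _ _).trans_le (abs_sub_le_of_nonneg_of_le ?_ ?_ ?_ ?_) <;>
        first
          | exact NNReal.coe_nonneg _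
          | exact NNReal.coe_le_coe.2 (min_le_right _ _))
  have hg : (fun μ : ProbabilityMeasure E => ∫⁻ x, (f x : ℝ≥0∞) ∂(μ : Measure E)) =
      fun μ : ProbabilityMeasure E => ⨆ n, ∫⁻ x, (g n x : ℝ≥0∞) ∂(μ : Measure E) := by
    funext μ
    rw [← lintegral_iSup]
    · refine lintegral_congr fun x => le_antisymm ?_ (iSup_le fun n => ?_)
      · obtain ⟨n, hn⟩ := exists_nat_ge (f x)
        refine le_iSup_of_le n (ENNReal.coe_le_coe.2 ?_)
        exact le_min le_rfl hn
      · exact ENNReal.coe_le_coe.2 (min_le_left _ _)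
    · exact fun n => (ENNReal.continuous_coe.comp (g n).continuous).measurable
    · intro m n hmn x
      refine ENNReal.coe_le_coe.2 (min_le_min le_rfl ?_)
      exact_mod_cast hmn
  rw [hg]
  exact lowerSemicontinuous_iSup fun n =>
    (ProbabilityMeasure.continuous_lintegral_boundedContinuousFunction (g n)).lowerSemicontinuous

/-- On a nonempty, tight and weakly closed set of probability measures, integration of a
nonnegative continuous function attains its minimum. -/
lemma exists_forall_lintegral_le [T2Space E] [BorelSpace E] {S : Set (ProbabilityMeasure E)}
    (hne : S.Nonempty) (hcl : IsClosed S)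
    (hS : IsTightMeasureSet {((μ : ProbabilityMeasure E) : Measure E) | μ ∈ S})
    {f : E → ℝ≥0} (hf : Continuous f) :
    ∃ μ ∈ S, ∀ μ' ∈ S, ∫⁻ x, (f x : ℝ≥0∞) ∂(μ : Measure E) ≤
      ∫⁻ x, (f x : ℝ≥0∞) ∂(μ' : Measure E) := by
  have hK : IsCompact S := hcl.closure_eq ▸ isCompact_closure_of_isTightMeasureSet hS
  obtain ⟨μ, hμ, hmin⟩ := LowerSemicontinuousOn.exists_isMinOn hne hK
    ((lowerSemicontinuous_lintegral hf).lowerSemicontinuousOn S)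
  exact ⟨μ, hμ, fun μ' hμ' => hmin hμ'⟩

end LinearProgram

lemma isClosed_setOf_map_eq {E F : Type*} [MeasurableSpace E] [TopologicalSpace E]
    [OpensMeasurableSpace E] [MeasurableSpace F] [TopologicalSpace F] [BorelSpace F]
    [HasOuterApproxClosed F] {g : E → F} (hg : Continuous g) (ν : Measure F) :
    IsClosed {μ : ProbabilityMeasure E | (μ : Measure E).map g = ν} := by
  by_cases hν : IsProbabilityMeasure ν
  · have h : {μ : ProbabilityMeasure E | (μ : Measure E).map g = ν} =
        (fun μ : ProbabilityMeasure E => μ.map hg.measurable.aemeasurable) ⁻¹'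
          {(⟨ν, hν⟩ : ProbabilityMeasure F)} := by
      ext μ
      exact (Subtype.ext_iff (a1 := μ.map hg.measurable.aemeasurable)
        (a2 := (⟨ν, hν⟩ : ProbabilityMeasure F))).symm
    rw [h]
    exact isClosed_singleton.preimage (ProbabilityMeasure.continuous_map hg)
  · convert! isClosed_empty
    refine Set.eq_empty_iff_forall_notMem.2 fun μ hμ => hν ?_
    rw [← show (μ : Measure E).map g = ν from hμ]
    exact Measure.isProbabilityMeasure_map hg.measurable.aemeasurable

/-- In a proper space, measures with uniformly bounded first moments are tight. -/
lemma isTightMeasureSet_of_lintegral_edist_le {X : Type*} [MetricSpace X] [ProperSpace X]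
    [MeasurableSpace X] [BorelSpace X] {S : Set (Measure X)} (a : X) {M : ℝ≥0∞} (hM : M ≠ ∞)
    (hS : ∀ μ ∈ S, ∫⁻ x, edist a x ∂μ ≤ M) : IsTightMeasureSet S := by
  rw [isTightMeasureSet_iff_exists_isCompact_measure_compl_le]
  intro ε hε
  obtain ⟨n, hn⟩ := ENNReal.exists_nat_gt (ENNReal.div_lt_top hM hε.ne').ne
  have hn0 : (n : ℝ≥0∞) ≠ 0 := (zero_le.trans_lt hn).ne'
  refine ⟨Metric.closedBall a n, isCompact_closedBall a n, fun μ hμ => ?_⟩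
  have hsub : (Metric.closedBall a n)ᶜ ⊆ {x | (n : ℝ≥0∞) ≤ edist a x} := by
    intro x hx
    have hx' : (n : ℝ) < dist a x := by
      simpa [dist_comm] using hx
    rw [Set.mem_ofPred_eq, edist_dist, ← ENNReal.ofReal_natCast]
    exact ENNReal.ofReal_le_ofReal hx'.le
  calc μ (Metric.closedBall a n)ᶜ ≤ μ {x | (n : ℝ≥0∞) ≤ edist a x} := measure_mono hsub
    _ ≤ (∫⁻ x, edist a x ∂μ) / n :=
        meas_ge_le_lintegral_div (by fun_prop) hn0 (ENNReal.natCast_ne_top n)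
    _ ≤ M / n := by gcongr; exact hS μ hμ
    _ ≤ ε := by
        rw [ENNReal.div_le_iff hn0 (ENNReal.natCast_ne_top n), mul_comm]
        exact (ENNReal.div_le_iff_le_mul (Or.inl hε.ne') (Or.inr hn0)).1 hn.le

/-- A set of measures on a finite power is tight if all its marginals are tight. -/
lemma isTightMeasureSet_pi {ι X : Type*} [Fintype ι] [MeasurableSpace X] [TopologicalSpace X]
    {S : Set (Measure (ι → X))}
    (hS : ∀ i, IsTightMeasureSet ((fun μ => μ.map (fun x => x i)) '' S)) :
    IsTightMeasureSet S := by
  simp only [isTightMeasureSet_iff_exists_isCompact_measure_compl_le] at hS ⊢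
  intro ε hε
  choose K hK hle using fun i => hS i (ε / Fintype.card ι)
    (ENNReal.div_pos hε.ne' (ENNReal.natCast_ne_top _))
  refine ⟨Set.univ.pi K, isCompact_univ_pi hK, fun μ hμ => ?_⟩
  have hsub : (Set.univ.pi K)ᶜ ⊆ ⋃ i, (fun x : ι → X => x i) ⁻¹' (K i)ᶜ := by
    intro x hx
    simpa using hx
  calc μ (Set.univ.pi K)ᶜ ≤ μ (⋃ i, (fun x : ι → X => x i) ⁻¹' (K i)ᶜ) := measure_mono hsub
    _ ≤ ∑ i, μ ((fun x : ι → X => x i) ⁻¹' (K i)ᶜ) := measure_iUnion_fintype_le _ _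
    _ ≤ ∑ _i : ι, ε / Fintype.card ι := Finset.sum_le_sum fun i _ =>
        (Measure.le_map_apply (measurable_pi_apply i).aemeasurable _).trans (hle i _ ⟨μ, hμ, rfl⟩)
    _ ≤ ε := by
        rw [Finset.sum_const, nsmul_eq_mul, Finset.card_univ]
        exact ENNReal.mul_div_le

section Wasserstein

variable {X : Type*} [MeasurableSpace X]

lemma map_swap_mem_Couplings {μ ν : Measure X} {γ : Measure (X × X)} (hγ : γ ∈ Couplings μ ν) :
    γ.map Prod.swap ∈ Couplings ν μ := by
  obtain ⟨h, h₁, h₂⟩ := hγ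
  refine ⟨Measure.isProbabilityMeasure_map (by fun_prop), ?_, ?_⟩
  · rw [Measure.map_map measurable_fst measurable_swap]; exact h₂
  · rw [Measure.map_map measurable_snd measurable_swap]; exact h₁

variable [MetricSpace X]

lemma lintegral_edist_ne_top_of_mem_P1 {μ : Measure X} (hμ : μ ∈ P1 X) (a : X) :
    ∫⁻ x, edist a x ∂μ ≠ ∞ := by
  have h := (hasFiniteIntegral_iff_ofReal (ae_of_all _ fun x => dist_nonneg)).1
    (hμ.2 a).hasFiniteIntegral
  simpa only [edist_dist] using h.ne

lemma mem_P1_of_lintegral_edist_ne_top [OpensMeasurableSpace X] {μ : Measure X}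
    [IsProbabilityMeasure μ] {a : X} (h : ∫⁻ x, edist a x ∂μ ≠ ∞) : μ ∈ P1 X := by
  have ha : Integrable (fun x => dist a x) μ := by
    refine ⟨by fun_prop, (hasFiniteIntegral_iff_ofReal (ae_of_all _ fun x => dist_nonneg)).2 ?_⟩
    simpa only [edist_dist] using h.lt_top
  refine ⟨inferInstance, fun b => ?_⟩
  refine ((integrable_const (dist b a)).add ha).mono' (by fun_prop) (ae_of_all _ fun x => ?_)
  rw [Real.norm_of_nonneg dist_nonneg]
  exact dist_triangle b a x

lemma lintegral_edist_map_swap [OpensMeasurableSpace X] [SecondCountableTopology X]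
    (γ : Measure (X × X)) :
    ∫⁻ p, edist p.1 p.2 ∂(γ.map Prod.swap) = ∫⁻ p, edist p.1 p.2 ∂γ := by
  rw [lintegral_map (by fun_prop) measurable_swap]
  exact lintegral_congr fun p => edist_comm _ _

lemma W1_comm [OpensMeasurableSpace X] [SecondCountableTopology X] (μ ν : Measure X) :
    W1 μ ν = W1 ν μ := by
  have h (μ ν : Measure X) : (⨅ γ ∈ Couplings μ ν, ∫⁻ p, edist p.1 p.2 ∂γ) ≤
      ⨅ γ ∈ Couplings ν μ, ∫⁻ p, edist p.1 p.2 ∂γ :=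
    le_iInf₂ fun γ hγ => iInf₂_le_of_le _ (map_swap_mem_Couplings hγ)
      (lintegral_edist_map_swap γ).le
  rw [W1, W1, le_antisymm (h μ ν) (h ν μ)]

lemma W1_nonneg (μ ν : Measure X) : 0 ≤ W1 μ ν := ENNReal.toReal_nonneg

lemma ofReal_W1_le {μ ν : Measure X} {γ : Measure (X × X)} (hγ : γ ∈ Couplings μ ν) :
    ENNReal.ofReal (W1 μ ν) ≤ ∫⁻ p, edist p.1 p.2 ∂γ :=
  ENNReal.ofReal_toReal_le.trans (iInf₂_le γ hγ)

lemma lintegral_edist_prod_ne_top [OpensMeasurableSpace X] {μ ν : Measure X}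
    (hμ : μ ∈ P1 X) (hν : ν ∈ P1 X) : ∫⁻ p, edist p.1 p.2 ∂(μ.prod ν) ≠ ∞ := by
  have := hμ.1
  have := hν.1
  obtain ⟨a⟩ := nonempty_of_isProbabilityMeasure μ
  have h : ∫⁻ p : X × X, (edist a p.1 + edist a p.2) ∂(μ.prod ν) =
      (∫⁻ x, edist a x ∂μ) + ∫⁻ x, edist a x ∂ν := by
    rw [lintegral_add_left (by fun_prop),
      (measurePreserving_fst (μ := μ) (ν := ν)).lintegral_comp (f := fun x => edist a x)
        (by fun_prop),
      (measurePreserving_snd (μ := μ) (ν := ν)).lintegral_comp (f := fun x => edist a x)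
        (by fun_prop)]
  refine ne_top_of_le_ne_top (ENNReal.add_ne_top.2 ⟨lintegral_edist_ne_top_of_mem_P1 hμ a,
    lintegral_edist_ne_top_of_mem_P1 hν a⟩) (h ▸ lintegral_mono fun p => ?_)
  exact edist_triangle_left _ _ _

/-- Existence of optimal transport plans for the cost `d`. -/
lemma exists_mem_Couplings_lintegral_eq [ProperSpace X] [BorelSpace X] {μ ν : Measure X}
    (hμ : μ ∈ P1 X) (hν : ν ∈ P1 X) :
    ∃ γ ∈ Couplings μ ν, ∫⁻ p, edist p.1 p.2 ∂γ = ENNReal.ofReal (W1 μ ν) := by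
  have := hμ.1
  have := hν.1
  have hprod : μ.prod ν ∈ Couplings μ ν :=
    ⟨inferInstance, measurePreserving_fst.map_eq, measurePreserving_snd.map_eq⟩
  let S : Set (ProbabilityMeasure (X × X)) :=
    {γ | (γ : Measure (X × X)).map Prod.fst = μ} ∩ {γ | (γ : Measure (X × X)).map Prod.snd = ν}
  have htight : IsTightMeasureSet {((γ : ProbabilityMeasure (X × X)) : Measure (X × X)) | γ ∈ S} := by
    refine IsTightMeasureSet.prodMk
      ((isTightMeasureSet_singleton (μ := μ)).subset ?_)
      ((isTightMeasureSet_singleton (μ := ν)).subset ?_)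
    · rintro _ ⟨_, ⟨γ, hγ, rfl⟩, rfl⟩; exact hγ.1
    · rintro _ ⟨_, ⟨γ, hγ, rfl⟩, rfl⟩; exact hγ.2
  obtain ⟨γ, hγ, hmin⟩ := exists_forall_lintegral_le (S := S)
    ⟨⟨μ.prod ν, inferInstance⟩, hprod.2⟩
    ((isClosed_setOf_map_eq continuous_fst μ).inter (isClosed_setOf_map_eq continuous_snd ν))
    htight (f := fun p => nndist p.1 p.2) (by fun_prop)
  simp only [← edist_nndist] at hmin
  refine ⟨γ, ⟨inferInstance, hγ⟩, le_antisymm ?_ (ofReal_W1_le ⟨inferInstance, hγ⟩)⟩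
  rw [W1, ENNReal.ofReal_toReal
    (ne_top_of_le_ne_top (lintegral_edist_prod_ne_top hμ hν) (iInf₂_le _ hprod))]
  exact le_iInf₂ fun γ' hγ' => hmin ⟨γ', hγ'.1⟩ hγ'.2

end Wasserstein

/-- Gluing: couplings with a common first marginal are the two-dimensional marginals of a single
measure. -/
lemma exists_gluing {ι X Y : Type*} [Fintype ι] [MeasurableSpace X] [MeasurableSpace Y]
    [StandardBorelSpace Y] [Nonempty Y] {ρ : Measure X} [IsProbabilityMeasure ρ]
    {γ : ι → Measure (X × Y)} [∀ i, IsFiniteMeasure (γ i)] (hγ : ∀ i, (γ i).fst = ρ) :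
    ∃ θ : Measure (X × (ι → Y)), IsProbabilityMeasure θ ∧ θ.map Prod.fst = ρ ∧
      ∀ i, θ.map (fun p => (p.1, p.2 i)) = γ i := by
  let κ : ProbabilityTheory.Kernel X (ι → Y) :=
    { toFun := fun x => Measure.pi fun i => (γ i).condKernel x
      measurable' := by
        refine Measurable.measure_of_isPiSystem_of_isProbabilityMeasure
          generateFrom_pi.symm isPiSystem_pi ?_
        rintro _ ⟨s, hs, rfl⟩
        simp only [Measure.pi_pi]
        exact Finset.measurable_prod _ fun i _ =>
          ProbabilityTheory.Kernel.measurable_coe _ (hs i trivial) }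
  have hκ : ProbabilityTheory.IsMarkovKernel κ :=
    ⟨fun x => inferInstanceAs (IsProbabilityMeasure (Measure.pi _))⟩
  refine ⟨ρ.compProd κ, inferInstance, Measure.fst_compProd ρ κ, fun i => ?_⟩
  have hmap : κ.map (fun x => x i) = (γ i).condKernel := by
    ext1 x
    rw [ProbabilityTheory.Kernel.map_apply _ (measurable_pi_apply i)]
    exact (measurePreserving_eval (fun i => (γ i).condKernel x) i).map_eq
  have h := Measure.compProd_map (μ := ρ) (κ := κ) (f := fun x : ι → Y => x i)
    (measurable_pi_apply (X := fun _ => Y) i)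
  rw [hmap, ← hγ i, (γ i).disintegrate] at h
  rw [← hγ i]
  exact h.symm

section MultiMarginal

lemma map_pair_mem_Couplings {X : Type*} [MeasurableSpace X] {N : ℕ} {ν : Fin N → Measure X}
    {θ : Measure (X × (Fin N → X))} (hθ : MMAdmissible ν θ) (j : Fin N) :
    θ.map (fun p => (p.1, p.2 j)) ∈ Couplings (θ.map Prod.fst) (ν j) := by
  have := hθ.1
  have hm : Measurable fun p : X × (Fin N → X) => (p.1, p.2 j) := by fun_prop
  refine ⟨Measure.isProbabilityMeasure_map hm.aemeasurable, ?_, ?_⟩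
  · rw [Measure.map_map measurable_fst hm]; rfl
  · rw [Measure.map_map measurable_snd hm]; exact hθ.2 j

variable {X : Type*} [MetricSpace X] [MeasurableSpace X] {N : ℕ}
  {l : Fin N → ℝ} {ν : Fin N → Measure X} {θ : Measure (X × (Fin N → X))}

lemma medCost_nonneg (hl : memSimplex l) (μ : Measure X) : 0 ≤ medCost l ν μ :=
  Finset.sum_nonneg fun i _ => mul_nonneg (hl.1 i) (W1_nonneg _ _)

lemma exists_pos_of_memSimplex (hl : memSimplex l) : ∃ j, 0 < l j := by
  by_contra! h
  have := Finset.sum_nonpos fun i (_ : i ∈ Finset.univ) => h i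
  linarith [hl.2]

lemma MMCost_eq_lintegral_coe (l : Fin N → ℝ) (θ : Measure (X × (Fin N → X))) :
    MMCost l θ =
      ∫⁻ p, ((∑ i, (l i).toNNReal * nndist (p.2 i) p.1 : ℝ≥0) : ℝ≥0∞) ∂θ := by
  refine lintegral_congr fun p => ?_
  push_cast
  rfl

variable [BorelSpace X] [SecondCountableTopology X]

lemma ofReal_medCost (hl : memSimplex l) (μ : Measure X) :
    ENNReal.ofReal (medCost l ν μ) =
      ∑ i, ENNReal.ofReal (l i) * ENNReal.ofReal (W1 μ (ν i)) := by
  rw [medCost, ENNReal.ofReal_sum_of_nonneg fun i _ => mul_nonneg (hl.1 i) (W1_nonneg _ _)]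
  exact Finset.sum_congr rfl fun i _ => by rw [ENNReal.ofReal_mul (hl.1 i), W1_comm]

lemma MMCost_eq_sum (l : Fin N → ℝ) (θ : Measure (X × (Fin N → X))) :
    MMCost l θ = ∑ i, ENNReal.ofReal (l i) * ∫⁻ p, edist p.1 (p.2 i) ∂θ := by
  rw [MMCost, lintegral_finsetSum _ fun i _ => by fun_prop]
  refine Finset.sum_congr rfl fun i _ => ?_
  rw [lintegral_const_mul _ (by fun_prop)]
  simp only [edist_comm]

lemma lintegral_edist_map_pair (θ : Measure (X × (Fin N → X))) (j : Fin N) :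
    ∫⁻ p, edist p.1 p.2 ∂(θ.map fun p => (p.1, p.2 j)) = ∫⁻ p, edist p.1 (p.2 j) ∂θ :=
  lintegral_map (by fun_prop) (by fun_prop)

lemma ofReal_W1_le_lintegral (hθ : MMAdmissible ν θ) (j : Fin N) :
    ENNReal.ofReal (W1 (θ.map Prod.fst) (ν j)) ≤ ∫⁻ p, edist p.1 (p.2 j) ∂θ :=
  (ofReal_W1_le (map_pair_mem_Couplings hθ j)).trans_eq (lintegral_edist_map_pair θ j)

lemma ofReal_medCost_le_MMCost (hl : memSimplex l) (hθ : MMAdmissible ν θ) :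
    ENNReal.ofReal (medCost l ν (θ.map Prod.fst)) ≤ MMCost l θ := by
  rw [ofReal_medCost hl, MMCost_eq_sum]
  gcongr with i
  exact ofReal_W1_le_lintegral hθ i

/-- The moment of the `x₀`-marginal is controlled by the multi-marginal cost. -/
lemma lintegral_edist_map_fst_le (hθ : MMAdmissible ν θ) {j : Fin N} (hj : 0 < l j) (a : X) :
    ∫⁻ x, edist a x ∂(θ.map Prod.fst) ≤
      (∫⁻ x, edist a x ∂(ν j)) + MMCost l θ / ENNReal.ofReal (l j) := by
  have hj' : ENNReal.ofReal (l j) ≠ 0 := (ENNReal.ofReal_pos.2 hj).ne'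
  have hle : ∫⁻ p, edist p.1 (p.2 j) ∂θ ≤ MMCost l θ / ENNReal.ofReal (l j) := by
    rw [ENNReal.le_div_iff_mul_le (Or.inl hj') (Or.inl ENNReal.ofReal_ne_top), mul_comm,
      MMCost_eq_sum]
    exact Finset.single_le_sum
      (f := fun i => ENNReal.ofReal (l i) * ∫⁻ p, edist p.1 (p.2 i) ∂θ)
      (fun _ _ => zero_le) (Finset.mem_univ j)
  calc ∫⁻ x, edist a x ∂(θ.map Prod.fst) = ∫⁻ p, edist a p.1 ∂θ :=
        lintegral_map (by fun_prop) measurable_fst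
    _ ≤ ∫⁻ p, (edist a (p.2 j) + edist p.1 (p.2 j)) ∂θ :=
        lintegral_mono fun p => edist_triangle_right _ _ _
    _ = (∫⁻ x, edist a x ∂(ν j)) + ∫⁻ p, edist p.1 (p.2 j) ∂θ := by
        rw [lintegral_add_left (by fun_prop), ← hθ.2 j,
          lintegral_map (by fun_prop) (by fun_prop)]
    _ ≤ _ := by gcongr

lemma map_fst_mem_P1 (hl : memSimplex l) (hν : ∀ i, ν i ∈ P1 X) (hθ : MMAdmissible ν θ)
    (hc : MMCost l θ ≠ ∞) : θ.map Prod.fst ∈ P1 X := by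
  have := hθ.1
  obtain ⟨j, hj⟩ := exists_pos_of_memSimplex hl
  have := (hν j).1
  obtain ⟨a⟩ := nonempty_of_isProbabilityMeasure (ν j)
  have := Measure.isProbabilityMeasure_map (μ := θ) measurable_fst.aemeasurable
  refine mem_P1_of_lintegral_edist_ne_top (a := a)
    (ne_top_of_le_ne_top ?_ (lintegral_edist_map_fst_le hθ hj a))
  exact ENNReal.add_ne_top.2 ⟨lintegral_edist_ne_top_of_mem_P1 (hν j) a,
    ENNReal.div_ne_top hc (ENNReal.ofReal_pos.2 hj).ne'⟩

/-- Gluing optimal plans between `ρ` and the `νᵢ` gives a multi-marginal plan whose cost is the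
dispersion of `ρ`. -/
lemma exists_MMAdmissible_MMCost_eq [ProperSpace X] (hl : memSimplex l) (hν : ∀ i, ν i ∈ P1 X)
    {ρ : Measure X} (hρ : ρ ∈ P1 X) :
    ∃ θ : Measure (X × (Fin N → X)), MMAdmissible ν θ ∧ θ.map Prod.fst = ρ ∧
      MMCost l θ = ENNReal.ofReal (medCost l ν ρ) := by
  have := hρ.1
  have := nonempty_of_isProbabilityMeasure ρ
  choose γ hγ hcost using fun i => exists_mem_Couplings_lintegral_eq hρ (hν i)
  have := fun i => (hγ i).1
  obtain ⟨θ, hθ, hfst, hpair⟩ := exists_gluing fun i => (hγ i).2.1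
  refine ⟨θ, ⟨hθ, fun i => ?_⟩, hfst, ?_⟩
  · rw [← (hγ i).2.2, ← hpair i, Measure.map_map measurable_snd (by fun_prop)]
    rfl
  · rw [MMCost_eq_sum, ofReal_medCost hl]
    refine Finset.sum_congr rfl fun i _ => ?_
    rw [← hcost i, ← hpair i, lintegral_edist_map_pair]

lemma exists_MMOptimal [ProperSpace X] (hl : memSimplex l) (hν : ∀ i, ν i ∈ P1 X) :
    ∃ θ, MMOptimal l ν θ := by
  obtain ⟨j, hj⟩ := exists_pos_of_memSimplex hl
  have := (hν j).1
  have := fun i => (hν i).1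
  obtain ⟨a⟩ := nonempty_of_isProbabilityMeasure (ν j)
  obtain ⟨θ₀, hθ₀, -, hcost⟩ := exists_MMAdmissible_MMCost_eq hl hν (hν j)
  have hfin : MMCost l θ₀ ≠ ∞ := hcost ▸ ENNReal.ofReal_ne_top
  let f : X × (Fin N → X) → ℝ≥0 := fun p => ∑ i, (l i).toNNReal * nndist (p.2 i) p.1
  have hf : Continuous f := by fun_prop
  let S : Set (ProbabilityMeasure (X × (Fin N → X))) :=
    (⋂ i, {θ | (θ : Measure (X × (Fin N → X))).map (fun p => p.2 i) = ν i}) ∩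
      {θ | ∫⁻ p, (f p : ℝ≥0∞) ∂(θ : Measure (X × (Fin N → X))) ≤ MMCost l θ₀}
  have hmem (θ : ProbabilityMeasure (X × (Fin N → X))) : θ ∈ S ↔
      MMAdmissible ν (θ : Measure (X × (Fin N → X))) ∧
        MMCost l (θ : Measure (X × (Fin N → X))) ≤ MMCost l θ₀ := by
    simp only [S, f, MMAdmissible, Set.mem_inter_iff, Set.mem_iInter, Set.mem_ofPred_eq,
      ← MMCost_eq_lintegral_coe]
    exact and_congr_left fun _ => (and_iff_right θ.2).symm
  have hclosed : IsClosed S :=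
    (isClosed_iInter fun i => isClosed_setOf_map_eq
      (g := fun p : X × (Fin N → X) => p.2 i) (by fun_prop) (ν i)).inter
      ((lowerSemicontinuous_lintegral hf).isClosed_preimage (MMCost l θ₀))
  have htight : IsTightMeasureSet
      {((θ : ProbabilityMeasure (X × (Fin N → X))) : Measure (X × (Fin N → X))) | θ ∈ S} := by
    refine IsTightMeasureSet.prodMk
      (isTightMeasureSet_of_lintegral_edist_le a
        (M := (∫⁻ x, edist a x ∂(ν j)) + MMCost l θ₀ / ENNReal.ofReal (l j)) ?_ ?_)
      (isTightMeasureSet_pi fun i => (isTightMeasureSet_singleton (μ := ν i)).subset ?_)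
    · exact ENNReal.add_ne_top.2 ⟨lintegral_edist_ne_top_of_mem_P1 (hν j) a,
        ENNReal.div_ne_top hfin (ENNReal.ofReal_pos.2 hj).ne'⟩
    · rintro _ ⟨_, ⟨θ, hθ, rfl⟩, rfl⟩
      rw [hmem] at hθ
      refine (lintegral_edist_map_fst_le hθ.1 hj a).trans ?_
      gcongr
      exact hθ.2
    · rintro _ ⟨_, ⟨_, ⟨θ, hθ, rfl⟩, rfl⟩, rfl⟩
      rw [hmem] at hθ
      rw [Set.mem_singleton_iff, ← hθ.1.2 i]
      exact Measure.map_map (measurable_pi_apply i) measurable_snd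
  have := hθ₀.1
  have hS₀ : (⟨θ₀, hθ₀.1⟩ : ProbabilityMeasure (X × (Fin N → X))) ∈ S :=
    (hmem _).2 ⟨hθ₀, le_rfl⟩
  obtain ⟨θ, hθ, hmin⟩ := exists_forall_lintegral_le ⟨_, hS₀⟩ hclosed htight hf
  simp only [f, ← MMCost_eq_lintegral_coe] at hmin
  refine ⟨θ, ((hmem θ).1 hθ).1, fun θ' hθ' => ?_⟩
  rcases le_total (MMCost l θ') (MMCost l θ₀) with h | h
  · exact hmin ⟨θ', hθ'.1⟩ ((hmem _).2 ⟨hθ', h⟩)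
  · exact ((hmem θ).1 hθ).2.trans h

lemma MMOptimal.MMCost_le [ProperSpace X] (hl : memSimplex l) (hν : ∀ i, ν i ∈ P1 X)
    (hθ : MMOptimal l ν θ) {ρ : Measure X} (hρ : ρ ∈ P1 X) :
    MMCost l θ ≤ ENNReal.ofReal (medCost l ν ρ) := by
  obtain ⟨θ', hθ', -, hcost⟩ := exists_MMAdmissible_MMCost_eq hl hν hρ
  exact hcost ▸ hθ.2 θ' hθ'

lemma MMOptimal.MMCost_ne_top [ProperSpace X] (hl : memSimplex l) (hν : ∀ i, ν i ∈ P1 X)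
    (hθ : MMOptimal l ν θ) : MMCost l θ ≠ ∞ := by
  obtain ⟨j, -⟩ := exists_pos_of_memSimplex hl
  exact ne_top_of_le_ne_top ENNReal.ofReal_ne_top (hθ.MMCost_le hl hν (hν j))

lemma MMOptimal.map_fst_mem_Med [ProperSpace X] (hl : memSimplex l) (hν : ∀ i, ν i ∈ P1 X)
    (hθ : MMOptimal l ν θ) : θ.map Prod.fst ∈ Med l ν :=
  ⟨map_fst_mem_P1 hl hν hθ.1 (hθ.MMCost_ne_top hl hν), fun ρ hρ =>
    (ENNReal.ofReal_le_ofReal_iff (medCost_nonneg hl ρ)).1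
      ((ofReal_medCost_le_MMCost hl hθ.1).trans (hθ.MMCost_le hl hν hρ))⟩

lemma MMOptimal.MMCost_eq [ProperSpace X] (hl : memSimplex l) (hν : ∀ i, ν i ∈ P1 X)
    (hθ : MMOptimal l ν θ) {ρ : Measure X} (hρ : ρ ∈ Med l ν) :
    MMCost l θ = ENNReal.ofReal (medCost l ν ρ) :=
  le_antisymm (hθ.MMCost_le hl hν hρ.1) <|
    (ENNReal.ofReal_le_ofReal (hρ.2 _ (hθ.map_fst_mem_Med hl hν).1)).trans
      (ofReal_medCost_le_MMCost hl hθ.1)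

lemma MMOptimal.lintegral_edist_eq [ProperSpace X] (hl : memSimplex l) (hν : ∀ i, ν i ∈ P1 X)
    (hθ : MMOptimal l ν θ) {j : Fin N} (hj : 0 < l j) :
    ∫⁻ p, edist p.1 (p.2 j) ∂θ = ENNReal.ofReal (W1 (θ.map Prod.fst) (ν j)) := by
  refine le_antisymm (not_lt.1 fun hlt => ?_) (ofReal_W1_le_lintegral hθ.1 j)
  have hsum := hθ.MMCost_eq hl hν (hθ.map_fst_mem_Med hl hν)
  have hfin : ENNReal.ofReal (medCost l ν (θ.map Prod.fst)) ≠ ∞ := ENNReal.ofReal_ne_top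
  rw [ofReal_medCost hl] at hsum hfin
  rw [MMCost_eq_sum, ← Finset.add_sum_erase _ _ (Finset.mem_univ j),
    ← Finset.add_sum_erase _ _ (Finset.mem_univ j)] at hsum
  rw [← Finset.add_sum_erase _ _ (Finset.mem_univ j)] at hfin
  refine hsum.not_gt (ENNReal.add_lt_add_of_lt_of_le (ENNReal.add_ne_top.1 hfin).2 ?_ ?_)
  · exact ENNReal.mul_lt_mul_right (ENNReal.ofReal_pos.2 hj).ne' ENNReal.ofReal_ne_top hlt
  · gcongr with i
    exact ofReal_W1_le_lintegral hθ.1 i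

end MultiMarginal

/-- Multi-marginal formulation: (1) the Wasserstein median problem and
the multi-marginal problem have the same (attained) minimal value; (2) every median is
the `x₀`-marginal of some optimal multi-marginal plan, and conversely the `x₀`-marginal
of any optimal plan is a median; (3) for an optimal plan `θ` with `λⱼ > 0`, the
pushforward of `θ` by `(x₀,…,x_N) ↦ (x₀, xⱼ)` is an optimal transport plan between
`ν* = π₀#θ` and `νⱼ`. -/
theorem median_multimarginal_formulation
    {X : Type*} [MetricSpace X] [ProperSpace X] [MeasurableSpace X] [BorelSpace X]
    {N : ℕ} (hN : 1 ≤ N) {l : Fin N → ℝ} (hl : memSimplex l)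
    {ν : Fin N → Measure X} (hν : ∀ i, ν i ∈ P1 X) :
    ((Med l ν).Nonempty ∧ (∃ θ, MMOptimal l ν θ) ∧
      ∀ νstar ∈ Med l ν, ∀ θ : Measure (X × (Fin N → X)), MMOptimal l ν θ →
        MMCost l θ = ENNReal.ofReal (medCost l ν νstar)) ∧
    ((∀ νstar ∈ Med l ν, ∃ θ : Measure (X × (Fin N → X)),
        MMOptimal l ν θ ∧ θ.map Prod.fst = νstar) ∧
      (∀ θ : Measure (X × (Fin N → X)), MMOptimal l ν θ →
        θ.map Prod.fst ∈ Med l ν)) ∧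
    (∀ θ : Measure (X × (Fin N → X)), MMOptimal l ν θ → ∀ j : Fin N, 0 < l j →
      θ.map (fun p => (p.1, p.2 j)) ∈ Couplings (θ.map Prod.fst) (ν j) ∧
      (∫⁻ p, edist p.1 (p.2 j) ∂θ) =
        ENNReal.ofReal (W1 (θ.map Prod.fst) (ν j))) := by
  obtain ⟨θ₀, hθ₀⟩ := exists_MMOptimal hl hν
  refine ⟨⟨⟨_, hθ₀.map_fst_mem_Med hl hν⟩, ⟨θ₀, hθ₀⟩, fun ρ hρ θ hθ => hθ.MMCost_eq hl hν hρ⟩,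
    ⟨fun ρ hρ => ?_, fun θ hθ => hθ.map_fst_mem_Med hl hν⟩,
    fun θ hθ j hj => ⟨map_pair_mem_Couplings hθ.1 j, hθ.lintegral_edist_eq hl hν hj⟩⟩
  obtain ⟨θ, hθ, hfst, hcost⟩ := exists_MMAdmissible_MMCost_eq hl hν hρ.1
  refine ⟨θ, ⟨hθ, fun θ' hθ' => ?_⟩, hfst⟩
  rw [hcost, ← hθ₀.MMCost_eq hl hν hρ]
  exact hθ₀.2 θ' hθ'
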